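/- Let p > 0 and ν ∈ ℂ. Set X(x) = p^(1/(p+1)) x^(p/(p+1)) for x > 0. Then, as x → +∞, F_{p,ν}(x) = √(2π/((p+1)X(x))) · (x/p)^(ν/(p+1)) · exp(−(p+1)(x/p)^(p/(p+1))) · (1 + o(1)); that is, the quotient of F_{p,ν}(x) by the displayed leading term tends to 1. -/

import Mathlib

open MeasureTheory Set Filter

/-!
The substitution `t = T eˢ`, where `T = (x / p) ^ (1 / (p + 1))` minimises `t ^ p + x / t`,
turns Krätzel's integral into a Laplace integral with large parameter `T ^ p`, amplitude `exp (ν s)`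
and the fixed phase `φ s = (exp (p s) - 1) + p (exp (-s) - 1)`. This phase dominates a multiple of
`s ^ 2` on the whole line and is `p (p + 1) / 2 * s ^ 2 + o(s ^ 2)` at `0`, so Laplace's method
applies: after rescaling `s` by the square root of the parameter, dominated convergence leads to a
Gaussian integral.
-/

open Asymptotics
open scoped Topology Real

section Laplace

variable {E : Type*} [NormedAddCommGroup E] [NormedSpace ℝ E] {φ : ℝ → ℝ} {g : ℝ → E}
  {a b c C : ℝ}

lemma tendsto_mul_comp_div_sqrt_of_isLittleO
    (hφ : (fun s ↦ φ s - a * s ^ 2) =o[𝓝 0] fun s ↦ s ^ 2) (u : ℝ) :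
    Tendsto (fun r ↦ r * φ (u / √r)) atTop (𝓝 (a * u ^ 2)) := by
  have hdiv : Tendsto (fun r ↦ u / √r) atTop (𝓝 0) :=
    tendsto_const_nhds.div_atTop Real.tendsto_sqrt_atTop
  have hrem : (fun r ↦ r * (φ (u / √r) - a * (u / √r) ^ 2)) =o[atTop] fun _ ↦ u ^ 2 := by
    refine ((isBigO_refl _ atTop).mul_isLittleO (hφ.comp_tendsto hdiv)).congr' .rfl ?_
    filter_upwards [eventually_gt_atTop 0] with r hr
    simp only [Function.comp_apply, div_pow, Real.sq_sqrt hr.le]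
    field_simp
  have hlim := hrem.trans_isBigO (isBigO_const_const (u ^ 2) (one_ne_zero' ℝ) atTop)
    |>.tendsto_div_nhds_zero.add_const (a * u ^ 2)
  simp only [div_one, zero_add] at hlim
  refine hlim.congr' ?_
  filter_upwards [eventually_gt_atTop 0] with r hr
  rw [div_pow, Real.sq_sqrt hr.le]
  field_simp
  ring

lemma norm_exp_neg_smul_rescaled_le (hφc : ∀ s, c * s ^ 2 ≤ φ s)
    (hg : ∀ s, ‖g s‖ ≤ C * Real.exp (b * s ^ 2)) {r : ℝ} (hr : 0 < r) (hb : b / r ≤ c / 2)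
    (u : ℝ) :
    ‖Real.exp (-(r * φ (u / √r))) • g (u / √r)‖ ≤ C * Real.exp (-(c / 2) * u ^ 2) := by
  have hC : 0 ≤ C := by simpa using (norm_nonneg _).trans (hg 0)
  have hsq : (u / √r) ^ 2 = u ^ 2 / r := by rw [div_pow, Real.sq_sqrt hr.le]
  have hphase : c * u ^ 2 ≤ r * φ (u / √r) := by
    calc c * u ^ 2 = r * (c * (u / √r) ^ 2) := by rw [hsq]; field_simp
      _ ≤ r * φ (u / √r) := by gcongr; exact hφc _
  have hgrowth : b * (u / √r) ^ 2 ≤ c / 2 * u ^ 2 := by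
    calc b * (u / √r) ^ 2 = b / r * u ^ 2 := by rw [hsq]; ring
      _ ≤ c / 2 * u ^ 2 := by gcongr
  calc ‖Real.exp (-(r * φ (u / √r))) • g (u / √r)‖
      = Real.exp (-(r * φ (u / √r))) * ‖g (u / √r)‖ := by
        rw [norm_smul, Real.norm_of_nonneg (Real.exp_pos _).le]
    _ ≤ Real.exp (-(c * u ^ 2)) * (C * Real.exp (c / 2 * u ^ 2)) := by
        gcongr
        exact (hg _).trans (by gcongr)
    _ = C * Real.exp (-(c / 2) * u ^ 2) := by
        rw [mul_left_comm, ← Real.exp_add]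
        ring_nf

theorem tendsto_sqrt_smul_integral_exp_neg_mul_smul [CompleteSpace E]
    (hφm : Measurable φ) (hgm : StronglyMeasurable g) (hc : 0 < c)
    (hφc : ∀ s, c * s ^ 2 ≤ φ s) (hφ : (fun s ↦ φ s - a * s ^ 2) =o[𝓝 0] fun s ↦ s ^ 2)
    (hg : ∀ s, ‖g s‖ ≤ C * Real.exp (b * s ^ 2)) (hg0 : ContinuousAt g 0) :
    Tendsto (fun r ↦ √r • ∫ s, Real.exp (-(r * φ s)) • g s) atTop (𝓝 (√(π / a) • g 0)) := by
  have hrescale (r : ℝ) : √r • ∫ s, Real.exp (-(r * φ s)) • g s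
      = ∫ u, Real.exp (-(r * φ (u / √r))) • g (u / √r) := by
    rw [Measure.integral_comp_div (fun s ↦ Real.exp (-(r * φ s)) • g s),
      abs_of_nonneg (Real.sqrt_nonneg r)]
  simp only [hrescale, ← integral_gaussian, ← integral_smul_const]
  refine tendsto_integral_filter_of_dominated_convergence
    (fun u ↦ C * Real.exp (-(c / 2) * u ^ 2)) (.of_forall fun r ↦ ?_) ?_
    ((integrable_exp_neg_mul_sq (half_pos hc)).const_mul C) (.of_forall fun u ↦ ?_)
  · have hdiv : Measurable fun u ↦ u / √r := measurable_id.div_const _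
    exact ((hφm.comp hdiv).const_mul r).neg.exp.aestronglyMeasurable.smul
      (hgm.comp_measurable hdiv).aestronglyMeasurable
  · have hb : ∀ᶠ r in atTop, b / r ≤ c / 2 :=
      (tendsto_const_nhds.div_atTop tendsto_id).eventually_le_const (half_pos hc)
    filter_upwards [eventually_gt_atTop 0, hb] with r hr hbr
    exact .of_forall (norm_exp_neg_smul_rescaled_le hφc hg hr hbr)
  · have hdiv : Tendsto (fun r ↦ u / √r) atTop (𝓝 0) :=
      tendsto_const_nhds.div_atTop Real.tendsto_sqrt_atTop
    simp only [neg_mul]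
    exact ((Real.continuous_exp.tendsto _).comp
      (tendsto_mul_comp_div_sqrt_of_isLittleO hφ u).neg).smul (hg0.tendsto.comp hdiv)

end Laplace

section Mellin

variable {E : Type*} [NormedAddCommGroup E]

lemma integral_Ioi_zero_eq_integral_exp_smul [NormedSpace ℝ E] (f : ℝ → E) :
    ∫ t in Ioi 0, f t = ∫ s, Real.exp s • f (Real.exp s) := by
  rw [← Real.range_exp, ← image_univ, integral_image_eq_integral_abs_deriv_smul .univ
    (fun s _ ↦ (Real.hasDerivAt_exp s).hasDerivWithinAt) Real.exp_injective.injOn,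
    Measure.restrict_univ]
  simp only [Real.abs_exp]

lemma ofReal_exp_cpow (s : ℝ) (z : ℂ) : (Real.exp s : ℂ) ^ z = Complex.exp (z * s) := by
  rw [Complex.cpow_def_of_ne_zero (by simp), ← Complex.ofReal_log (Real.exp_pos s).le,
    Real.log_exp, mul_comm]

lemma mellin_eq_integral_exp_mul_smul [NormedSpace ℂ E] (f : ℝ → E) (z : ℂ) :
    mellin f z = ∫ s : ℝ, Complex.exp (z * s) • f (Real.exp s) := by
  rw [mellin, integral_Ioi_zero_eq_integral_exp_smul]
  congr with s
  rw [ofReal_exp_cpow, ← Complex.coe_smul, smul_smul, Complex.ofReal_exp, ← Complex.exp_add]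
  ring_nf

end Mellin

lemma ofReal_rpow_cpow {x : ℝ} (hx : 0 ≤ x) (y : ℝ) (z : ℂ) :
    ((x ^ y : ℝ) : ℂ) ^ z = (x : ℂ) ^ (y * z) := by
  have him : (Complex.log x * y).im = 0 := by
    rw [← Complex.ofReal_log hx, ← Complex.ofReal_mul, Complex.ofReal_im]
  rw [Complex.ofReal_cpow hx, ← Complex.cpow_mul _ (by simp [him, Real.pi_pos])
    (by simp [him, Real.pi_pos.le])]

lemma isLittleO_exp_sub_one_sub_id_sub_sq_div_two :
    (fun s ↦ Real.exp s - 1 - s - s ^ 2 / 2) =o[𝓝 0] fun s ↦ s ^ 2 :=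
  (Real.exp_sub_sum_range_succ_isLittleO_pow 2).congr_left fun s ↦ by
    simp [Finset.sum_range_succ]
    ring

lemma norm_exp_mul_ofReal_le (z : ℂ) (s : ℝ) :
    ‖Complex.exp (z * s)‖ ≤ Real.exp (‖z‖ ^ 2 / 2) * Real.exp (1 / 2 * s ^ 2) := by
  rw [Complex.norm_exp, ← Real.exp_add, Real.exp_le_exp]
  calc (z * s).re ≤ ‖z‖ * |s| := by simpa using Complex.re_le_norm (z * s)
    _ ≤ ‖z‖ ^ 2 / 2 + 1 / 2 * s ^ 2 := by nlinarith [two_mul_le_add_sq ‖z‖ |s|, sq_abs s]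

/-- The exponent of Krätzel's integral in the logarithmic variable `s = log (t / T)` around the
saddle point `T`, normalised to vanish at `s = 0`: if `x = p * T ^ (p + 1)` then
`t ^ p + x / t = T ^ p * (p + 1 + kratzelPhase p s)`. -/
noncomputable def kratzelPhase (p s : ℝ) : ℝ :=
  (Real.exp (p * s) - 1) + p * (Real.exp (-s) - 1)

/-- Krätzel's integral `F_{p,ν}(x)`, written as a Mellin transform so that the scaling `t = T * u`
is `mellin_comp_mul_left`. -/
noncomputable def kratzelIntegral (p : ℝ) (ν : ℂ) (x : ℝ) : ℂ :=
  mellin (fun t ↦ Complex.exp (-((t ^ p : ℝ) : ℂ) - ((x / t : ℝ) : ℂ))) ν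

/-- The saddle-point approximation of `kratzelIntegral p ν x`, in terms of the saddle point `T`
with `x = p * T ^ (p + 1)`; then `X = p * T ^ p`. -/
noncomputable def kratzelSaddleTerm (p : ℝ) (ν : ℂ) (T : ℝ) : ℂ :=
  (√(2 * π / ((p + 1) * (p * T ^ p))) : ℂ) * (T : ℂ) ^ ν
    * Complex.exp (-(((p + 1) * T ^ p : ℝ) : ℂ))

lemma measurable_kratzelPhase (p : ℝ) : Measurable (kratzelPhase p) := by
  unfold kratzelPhase
  fun_prop

lemma mul_sq_le_kratzelPhase {p : ℝ} (hp : 0 ≤ p) (s : ℝ) :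
    min p (p ^ 2) / 2 * s ^ 2 ≤ kratzelPhase p s := by
  have hexp_p := Real.add_one_le_exp (p * s)
  have hexp_neg := Real.add_one_le_exp (-s)
  unfold kratzelPhase
  rcases le_total 0 s with hs | hs
  · calc min p (p ^ 2) / 2 * s ^ 2 ≤ p ^ 2 / 2 * s ^ 2 := by gcongr; exact min_le_right _ _
      _ ≤ (Real.exp (p * s) - 1) + p * (Real.exp (-s) - 1) := by
        nlinarith [Real.quadratic_le_exp_of_nonneg (mul_nonneg hp hs)]
  · calc min p (p ^ 2) / 2 * s ^ 2 ≤ p / 2 * s ^ 2 := by gcongr; exact min_le_left _ _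
      _ ≤ (Real.exp (p * s) - 1) + p * (Real.exp (-s) - 1) := by
        nlinarith [Real.quadratic_le_exp_of_nonneg (neg_nonneg.2 hs)]

lemma kratzelPhase_sub_mul_sq_isLittleO (p : ℝ) :
    (fun s ↦ kratzelPhase p s - p * (p + 1) / 2 * s ^ 2) =o[𝓝 0] fun s ↦ s ^ 2 := by
  have hscaled (k : ℝ) : (fun s ↦ Real.exp (k * s) - 1 - k * s - (k * s) ^ 2 / 2) =o[𝓝 0]
      fun s ↦ s ^ 2 := by
    have hk : Tendsto (fun s ↦ k * s) (𝓝 0) (𝓝 0) :=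
      (continuous_const_mul k).tendsto' 0 0 (mul_zero k)
    refine (isLittleO_exp_sub_one_sub_id_sub_sq_div_two.comp_tendsto hk).trans_isBigO ?_
    simpa only [Function.comp_def, mul_pow] using isBigO_const_mul_self (k ^ 2) (· ^ 2) (𝓝 0)
  refine ((hscaled p).add ((hscaled (-1)).const_mul_left p)).congr_left fun s ↦ ?_
  rw [kratzelPhase, neg_one_mul]
  ring

lemma kratzel_exponent_eq (p : ℝ) {T : ℝ} (hT : 0 < T) (s : ℝ) :
    (T * Real.exp s) ^ p + p * T ^ (p + 1) / (T * Real.exp s)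
      = (p + 1) * T ^ p + T ^ p * kratzelPhase p s := by
  rw [kratzelPhase, Real.mul_rpow hT.le (Real.exp_pos s).le, ← Real.exp_mul, mul_comm s p,
    Real.rpow_add_one hT.ne', Real.exp_neg]
  field_simp
  ring

lemma kratzelIntegral_eq_integral_kratzelPhase (p : ℝ) (ν : ℂ) {T : ℝ} (hT : 0 < T) :
    kratzelIntegral p ν (p * T ^ (p + 1))
      = (T : ℂ) ^ ν * Complex.exp (-(((p + 1) * T ^ p : ℝ) : ℂ))
        * ∫ s : ℝ, Real.exp (-(T ^ p * kratzelPhase p s)) • Complex.exp (ν * s) := by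
  have hTν : (T : ℂ) ^ ν ≠ 0 := by simp [hT.ne']
  rw [kratzelIntegral, mul_assoc, ← inv_mul_eq_iff_eq_mul₀ hTν, ← Complex.cpow_neg, ← smul_eq_mul,
    ← mellin_comp_mul_left _ _ hT, mellin_eq_integral_exp_mul_smul, ← integral_const_mul]
  congr with s
  rw [← neg_add', ← Complex.ofReal_add, kratzel_exponent_eq p hT, Complex.ofReal_add, neg_add,
    Complex.exp_add, Complex.real_smul, Complex.ofReal_exp, Complex.ofReal_neg, smul_eq_mul]
  ring

lemma tendsto_sqrt_smul_integral_kratzelPhase {p : ℝ} (hp : 0 < p) (ν : ℂ) :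
    Tendsto (fun r : ℝ ↦ √r • ∫ s : ℝ, Real.exp (-(r * kratzelPhase p s)) • Complex.exp (ν * s))
      atTop (𝓝 (√(2 * π / (p * (p + 1))) : ℂ)) := by
  have hcont : Continuous fun s : ℝ ↦ Complex.exp (ν * s) := by fun_prop
  have hlim := tendsto_sqrt_smul_integral_exp_neg_mul_smul (measurable_kratzelPhase p)
    hcont.stronglyMeasurable (by positivity) (mul_sq_le_kratzelPhase hp.le)
    (kratzelPhase_sub_mul_sq_isLittleO p) (norm_exp_mul_ofReal_le ν) hcont.continuousAt
  convert hlim using 2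
  simp [div_div_eq_mul_div, mul_comm π]

theorem tendsto_kratzelIntegral_div_kratzelSaddleTerm {p : ℝ} (hp : 0 < p) (ν : ℂ) :
    Tendsto (fun T ↦ kratzelIntegral p ν (p * T ^ (p + 1)) / kratzelSaddleTerm p ν T)
      atTop (𝓝 1) := by
  have hA : (√(2 * π / (p * (p + 1))) : ℂ) ≠ 0 := by
    exact_mod_cast (Real.sqrt_pos.2 (by positivity)).ne'
  have hlim := ((tendsto_sqrt_smul_integral_kratzelPhase hp ν).comp
    (tendsto_rpow_atTop hp)).div_const (√(2 * π / (p * (p + 1))) : ℂ)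
  rw [div_self hA] at hlim
  refine hlim.congr' ?_
  filter_upwards [eventually_gt_atTop 0] with T hT
  have hTν : (T : ℂ) ^ ν ≠ 0 := by simp [hT.ne']
  have hsqrt : √(2 * π / ((p + 1) * (p * T ^ p))) = √(2 * π / (p * (p + 1))) / √(T ^ p) := by
    rw [← Real.sqrt_div (by positivity)]
    congr 1
    field_simp
  have hsqrtT : (√(T ^ p) : ℂ) ≠ 0 := by
    exact_mod_cast (Real.sqrt_pos.2 (by positivity)).ne'
  rw [kratzelIntegral_eq_integral_kratzelPhase p ν hT, kratzelSaddleTerm, hsqrt,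
    Complex.ofReal_div, Function.comp_apply, Complex.real_smul]
  field_simp [Complex.exp_ne_zero]

/-- The point `T` at which `t ^ p + x / t` is minimal over `t > 0`, around which
`kratzelPhase` is centred. -/
noncomputable def kratzelSaddle (p x : ℝ) : ℝ := (x / p) ^ (1 / (p + 1))

lemma tendsto_kratzelSaddle_atTop {p : ℝ} (hp : 0 < p) :
    Tendsto (kratzelSaddle p) atTop atTop :=
  (tendsto_rpow_atTop (by positivity)).comp (tendsto_id.atTop_div_const hp)

lemma kratzelSaddle_rpow {p x : ℝ} (hxp : 0 ≤ x / p) (q : ℝ) :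
    kratzelSaddle p x ^ q = (x / p) ^ (q / (p + 1)) := by
  rw [kratzelSaddle, ← Real.rpow_mul hxp, one_div_mul_eq_div]

lemma kratzelSaddle_cpow {p x : ℝ} (hxp : 0 ≤ x / p) (z : ℂ) :
    (kratzelSaddle p x : ℂ) ^ z = ((x / p : ℝ) : ℂ) ^ (z / (p + 1 : ℝ)) := by
  rw [kratzelSaddle, ofReal_rpow_cpow hxp, Complex.ofReal_div 1, Complex.ofReal_one,
    one_div_mul_eq_div]

lemma mul_kratzelSaddle_rpow_add_one {p x : ℝ} (hp : 0 < p) (hx : 0 ≤ x) :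
    p * kratzelSaddle p x ^ (p + 1) = x := by
  rw [kratzelSaddle_rpow (by positivity), div_self (by positivity), Real.rpow_one,
    mul_div_cancel₀ _ hp.ne']

lemma mul_kratzelSaddle_rpow {p x : ℝ} (hp : 0 < p) (hx : 0 ≤ x) :
    p * kratzelSaddle p x ^ p = p ^ (1 / (p + 1)) * x ^ (p / (p + 1)) := by
  have hexp : 1 / (p + 1) = 1 - p / (p + 1) := by field_simp; ring
  rw [kratzelSaddle_rpow (by positivity), Real.div_rpow hx hp.le, hexp, Real.rpow_sub hp,
    Real.rpow_one]
  ring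

/-- Leading asymptotic behaviour of Krätzel's integral for `p > 0` as `x → +∞`:
`F_{p,ν}(x) ~ √(2π/((p+1)X)) (x/p)^(ν/(p+1)) exp(-(p+1)(x/p)^(p/(p+1)))`
where `X = p^(1/(p+1)) x^(p/(p+1))`. -/
theorem kratzel_leading_asymptotics (p : ℝ) (hp : 0 < p) (ν : ℂ)
    (X : ℝ → ℝ) (hX : ∀ x : ℝ, X x = p ^ (1 / (p + 1)) * x ^ (p / (p + 1))) :
    Tendsto (fun x : ℝ =>
      (∫ t in Ioi (0 : ℝ), (t : ℂ) ^ (ν - 1)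
          * Complex.exp (-((t ^ p : ℝ) : ℂ) - ((x / t : ℝ) : ℂ)))
        / ((Real.sqrt (2 * Real.pi / ((p + 1) * X x)) : ℂ)
            * ((x / p : ℝ) : ℂ) ^ (ν / (p + 1 : ℝ))
            * Complex.exp (-(((p + 1) * (x / p) ^ (p / (p + 1)) : ℝ) : ℂ))))
      atTop (nhds 1) := by
  refine ((tendsto_kratzelIntegral_div_kratzelSaddleTerm hp ν).comp
    (tendsto_kratzelSaddle_atTop hp)).congr' ?_
  filter_upwards [eventually_ge_atTop 0] with x hx
  have hxp : 0 ≤ x / p := by positivity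
  rw [Function.comp_apply, mul_kratzelSaddle_rpow_add_one hp hx, kratzelSaddleTerm,
    mul_kratzelSaddle_rpow hp hx, ← hX, kratzelSaddle_cpow hxp, kratzelSaddle_rpow hxp]
  rfl
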